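/- arXiv:2308.12012 — 2 statements merged into one kernel-verified Lean document; each statement's English description precedes it below -/
import Mathlib

section
/- The space (ℝ², d*) is globally non-positively Busemann curved (NPBC): for any three points x, y, z ∈ ℝ², any midpoint m₁ of x and z, and any midpoint m₂ of y and z, one has d*(m₁, m₂) ≤ (1/2)·d*(x,y). -/
/-- The river metric on ℝ². -/
noncomputable def riverDist (u v : ℝ × ℝ) : ℝ :=
  if u.1 = v.1 then |u.2 - v.2| else |u.2| + |v.2| + |u.1 - v.1|

/-- The metric segment between two points of ℝ² with the river metric. -/
def riverSegment (u v : ℝ × ℝ) : Set (ℝ × ℝ) :=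
  {z | riverDist u z + riverDist z v = riverDist u v}

/-- A set is convex (w.r.t. the river metric) if it contains all metric segments
between its points. -/
def IsRiverConvex (K : Set (ℝ × ℝ)) : Prop :=
  ∀ u ∈ K, ∀ v ∈ K, riverSegment u v ⊆ K

/-- `m` is a midpoint of `u` and `v` for the river metric. -/
def IsRiverMidpoint (u v m : ℝ × ℝ) : Prop :=
  riverDist u m = riverDist u v / 2 ∧ riverDist m v = riverDist u v / 2

lemma line4 (p q r s : ℝ) : |p-q|+|r-s| ≤ |p-r|+|q-s| ∨ |p-q|+|r-s| ≤ |p-s|+|q-r| := by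
  by_contra! h
  obtain ⟨h1, h2⟩ := h
  rcases abs_cases (p-q) with h3 | h3 <;> rcases abs_cases (r-s) with h4 | h4 <;>
  linarith [le_abs_self (p-r), neg_abs_le (p-r), le_abs_self (q-s), neg_abs_le (q-s),
    le_abs_self (p-s), neg_abs_le (p-s), le_abs_self (q-r), neg_abs_le (q-r)]

lemma river_comm (u v : ℝ × ℝ) : riverDist u v = riverDist v u := by
  unfold riverDist
  rw [abs_sub_comm u.2, abs_sub_comm u.1]
  split_ifs <;> first | rfl | (exfalso; simp_all; done) | ring

lemma river_self (u : ℝ × ℝ) : riverDist u u = 0 := by simp [riverDist]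

set_option maxHeartbeats 4000000 in
lemma river4 (a b c e : ℝ × ℝ) :
    riverDist a b + riverDist c e ≤ riverDist a c + riverDist b e ∨
    riverDist a b + riverDist c e ≤ riverDist a e + riverDist b c := by
  obtain ⟨a, a'⟩ := a
  obtain ⟨b, b'⟩ := b
  obtain ⟨c, c'⟩ := c
  obtain ⟨e, e'⟩ := e
  have hx := line4 a b c e
  have hy := line4 a' b' c' e'
  have h1 := line4 0 b' c' e'
  have h2 := line4 a' 0 c' e'
  have h3 := line4 a' b' 0 e'
  have h4 := line4 a' b' c' 0
  have t1 := abs_sub a' b'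
  have t2 := abs_sub c' e'
  have t3 := abs_sub_le a c b
  have t4 := abs_sub_le c a e
  simp only [zero_sub, sub_zero, abs_neg] at h1 h2 h3 h4
  have s1 := abs_sub_comm a b
  have s2 := abs_sub_comm a c
  have s3 := abs_sub_comm a e
  have s4 := abs_sub_comm b c
  have s5 := abs_sub_comm b e
  have s6 := abs_sub_comm c e
  have n1 := abs_nonneg (a-c)
  have n2 := abs_nonneg (a-e)
  have n3 := abs_nonneg (b-c)
  have n4 := abs_nonneg (b-e)
  simp only [riverDist]
  by_cases k1 : a = b <;> by_cases k2 : c = e <;> by_cases k3 : a = c <;> by_cases k4 : b = e <;>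
  by_cases k5 : a = e <;> by_cases k6 : b = c <;>
  first
  | (exfalso; clear hx hy h1 h2 h3 h4 t1 t2 t3 t4 s1 s2 s3 s4 s5 s6 n1 n2 n3 n4; simp_all; done)
  | (simp only [k1, k2, k3, k4, k5, k6, if_true, if_false]
     generalize |a' - b'| = A1 at *
     generalize |c' - e'| = A2 at *
     generalize |a' - c'| = A3 at *
     generalize |b' - e'| = A4 at *
     generalize |a' - e'| = A5 at *
     generalize |b' - c'| = A6 at *
     grind)

lemma river_tri (a b c : ℝ × ℝ) : riverDist a b ≤ riverDist a c + riverDist b c := by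
  have := river4 a b c c
  rw [river_self] at this
  rcases this with h | h <;> linarith

/-- (ℝ², d*) is globally non-positively Busemann curved. -/
theorem river_NPBC :
    ∀ x y z m₁ m₂ : ℝ × ℝ, IsRiverMidpoint x z m₁ → IsRiverMidpoint y z m₂ →
      riverDist m₁ m₂ ≤ (1 / 2) * riverDist x y := by
  rintro x y z m n ⟨h1, h2⟩ ⟨h3, h4⟩
  have t1 := river_tri x y z
  have t2 := river_tri x z y
  have t3 := river_tri y z x
  have f1 := river4 m y x z
  have f2 := river4 m n y z
  rw [river_comm z y] at t2
  rw [river_comm z x, river_comm y x] at t3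
  rw [river_comm m x, river_comm y x] at f1
  rw [river_comm n y] at f2
  rcases f1 with f1 | f1 <;> rcases f2 with f2 | f2 <;> linarith
end

section
/- The space (ℝ², d*) is uniformly convex in the sense of Takahashi: for each ε > 0 there exists δ = δ(ε) > 0 such that for every c > 0 and all x, y, z ∈ ℝ² with d*(z,x) ≤ c, d*(z,y) ≤ c and d*(x,y) ≥ c·ε, and for every midpoint m of x and y (i.e. d*(x,m) = d*(m,y) = d*(x,y)/2), one has d*(z, m) ≤ c·(1 − δ). -/
theorem line_four (a b c d : ℝ) :
    |a - b| + |c - d| ≤ |a - c| + |b - d| ∨ |a - b| + |c - d| ≤ |a - d| + |b - c| := by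
  by_contra! h
  obtain ⟨h1, h2⟩ := h
  have e1 := le_abs_self (a - c)
  have e2 := neg_abs_le (a - c)
  have e3 := le_abs_self (b - d)
  have e4 := neg_abs_le (b - d)
  have e5 := le_abs_self (a - d)
  have e6 := neg_abs_le (a - d)
  have e7 := le_abs_self (b - c)
  have e8 := neg_abs_le (b - c)
  rcases abs_cases (a - b) with ⟨h3, _⟩ | ⟨h3, _⟩ <;>
  rcases abs_cases (c - d) with ⟨h4, _⟩ | ⟨h4, _⟩ <;>
  linarith

set_option maxHeartbeats 2000000 in
theorem river_four (z m x y : ℝ × ℝ) :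
    riverDist z m + riverDist x y ≤ riverDist z x + riverDist m y ∨
    riverDist z m + riverDist x y ≤ riverDist z y + riverDist m x := by
  obtain ⟨z1, z2⟩ := z
  obtain ⟨m1, m2⟩ := m
  obtain ⟨x1, x2⟩ := x
  obtain ⟨y1, y2⟩ := y
  have tri : ∀ a b : ℝ, |a - b| ≤ |a| + |b| := fun a b => abs_sub a b
  have F1 := line_four z1 m1 x1 y1
  have F2 := line_four z2 m2 x2 y2
  have G1 := line_four z2 m2 x2 0
  have G2 := line_four z2 m2 0 y2
  have G3 := line_four z2 0 x2 y2
  have G4 := line_four 0 m2 x2 y2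
  have t1 := tri z2 m2
  have t2 := tri x2 y2
  have s1 := abs_sub_le z1 x1 m1
  have s2 := abs_sub_le x1 z1 y1
  have c1 := abs_sub_comm x1 m1
  have c2 := abs_sub_comm x1 z1
  have c3 := abs_sub_comm z1 m1
  simp only [sub_zero, zero_sub, abs_neg] at G1 G2 G3 G4
  by_cases a1 : z1 = m1 <;> by_cases a2 : x1 = y1 <;> by_cases a3 : z1 = x1 <;>
    by_cases a4 : m1 = y1 <;> by_cases a5 : z1 = y1 <;> by_cases a6 : m1 = x1 <;>
    first
    | exact absurd (a1.symm.trans a3) a6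
    | exact absurd (a1.trans a6) a3
    | exact absurd (a1.symm.trans a5) a4
    | exact absurd (a1.trans a4) a5
    | exact absurd (a3.trans a6.symm) a1
    | exact absurd (a5.trans a4.symm) a1
    | exact absurd (a3.trans a2) a5
    | exact absurd (a5.trans a2.symm) a3
    | exact absurd (a6.trans a2) a4
    | exact absurd (a4.trans a2.symm) a6
    | exact absurd (a3.symm.trans a5) a2
    | exact absurd (a6.symm.trans a4) a2
    | skip
  all_goals
    simp only [riverDist]
    first | rw [if_pos a1] | rw [if_neg a1]
    first | rw [if_pos a2] | rw [if_neg a2]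
    first | rw [if_pos a3] | rw [if_neg a3]
    first | rw [if_pos a4] | rw [if_neg a4]
    first | rw [if_pos a5] | rw [if_neg a5]
    first | rw [if_pos a6] | rw [if_neg a6]
    try subst a1
    try subst a2
    try subst a3
    try subst a4
    try subst a5
    try subst a6
    try simp only [sub_self, abs_zero] at *
    first
    | (left; linarith)
    | (right; linarith)
    | (rcases F1 with h | h <;> first | (left; linarith) | (right; linarith))
    | (rcases F2 with h | h <;> first | (left; linarith) | (right; linarith))
    | (rcases G1 with h | h <;> first | (left; linarith) | (right; linarith))
    | (rcases G2 with h | h <;> first | (left; linarith) | (right; linarith))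
    | (rcases G3 with h | h <;> first | (left; linarith) | (right; linarith))
    | (rcases G4 with h | h <;> first | (left; linarith) | (right; linarith))

/-- (ℝ², d*) is uniformly convex in the sense of Takahashi. -/
theorem river_uniformly_convex :
    ∀ ε : ℝ, 0 < ε → ∃ δ : ℝ, 0 < δ ∧
      ∀ c : ℝ, 0 < c → ∀ x y z m : ℝ × ℝ,
        riverDist z x ≤ c → riverDist z y ≤ c → c * ε ≤ riverDist x y →
        IsRiverMidpoint x y m → riverDist z m ≤ c * (1 - δ) := by
  intro ε hε
  refine ⟨ε / 2, by linarith, ?_⟩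
  intro c hc x y z m h1 h2 h3 ⟨h4, h5⟩
  have hs : riverDist m x = riverDist x m := by
    simp only [riverDist, eq_comm (a := m.1), abs_sub_comm m.1, abs_sub_comm m.2, add_comm |m.2|]
  rcases river_four z m x y with h | h <;> nlinarith
end
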